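/- (Eckart–Young, subspace form) Let A ∈ ℝ^{p×n} with compact SVD A = UΣV (singular values in descending order). Among all X ∈ ℝ^{r×n} with X X^T = I_r (r ≤ rank(A)), the minimum of ‖A − A X^T X‖_F² is attained at X = V_{1:r}, the top r right singular vectors. -/

import Mathlib

/-!
For row-orthonormal `X`, Pythagoras turns `‖A - A Xᴴ X‖²` into `‖A‖² - ‖A Xᴴ‖²`, so one has to
maximize `‖A Xᴴ‖² = ∑ i, ‖σ i‖² * c i`, where `c i` is the squared norm of the `i`-th row of
`V Xᴴ`. Bessel's inequality for the rows of `V` against those of `X` gives `c i ≤ 1`; with the roles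
exchanged, it bounds `∑ i, c i` by the number `r` of rows of `X`. Such a weighted sum is at most the
sum of the `r` largest weights `‖σ i‖²`, and the corresponding rows of `V` attain this bound.
-/

open Matrix Finset

/-- Squared Frobenius norm. -/
def frobSq {p n : ℕ} (M : Matrix (Fin p) (Fin n) ℝ) : ℝ := ∑ i, ∑ j, (M i j) ^ 2

theorem sum_mul_le_sum_of_sum_le_card {ι R : Type*} [Fintype ι]
    [CommRing R] [LinearOrder R] [IsStrictOrderedRing R] {S : Finset ι} {s c : ι → R}
    (hs : ∀ i, 0 ≤ s i) (hS : ∀ i ∈ S, ∀ j ∉ S, s j ≤ s i)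
    (hc₀ : ∀ i, 0 ≤ c i) (hc₁ : ∀ i, c i ≤ 1) (hc : ∑ i, c i ≤ #S) :
    ∑ i, s i * c i ≤ ∑ i ∈ S, s i := by
  classical
  obtain ⟨t, ht, htS, htSc⟩ : ∃ t, 0 ≤ t ∧ (∀ i ∈ S, t ≤ s i) ∧ ∀ j ∈ Sᶜ, s j ≤ t := by
    rcases Sᶜ.eq_empty_or_nonempty with hempty | hne
    · exact ⟨0, le_rfl, fun i _ ↦ hs i, by simp [hempty]⟩
    · obtain ⟨j, hj, hmax⟩ := Sᶜ.exists_max_image s hne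
      exact ⟨s j, hs j, fun i hi ↦ hS i hi j (mem_compl.mp hj), hmax⟩
  have inside : ∑ i ∈ S, s i * c i ≤ ∑ i ∈ S, (s i - t + t * c i) :=
    sum_le_sum fun i hi ↦ by linarith [mul_add_mul_le_mul_add_mul (htS i hi) (hc₁ i)]
  have outside : ∑ i ∈ Sᶜ, s i * c i ≤ ∑ i ∈ Sᶜ, t * c i :=
    sum_le_sum fun i hi ↦ mul_le_mul_of_nonneg_right (htSc i hi) (hc₀ i)
  calc ∑ i, s i * c i
      = ∑ i ∈ S, s i * c i + ∑ i ∈ Sᶜ, s i * c i := (sum_add_sum_compl S _).symm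
    _ ≤ ∑ i ∈ S, (s i - t + t * c i) + ∑ i ∈ Sᶜ, t * c i := add_le_add inside outside
    _ = ∑ i ∈ S, s i - t * #S + t * ∑ i, c i := by
      rw [sum_add_distrib, add_assoc, sum_add_sum_compl, sum_sub_distrib, sum_const,
        nsmul_eq_mul, mul_comm, mul_sum]
    _ ≤ ∑ i ∈ S, s i := by linarith [mul_le_mul_of_nonneg_left hc ht]

theorem le_apply_castLE_of_antitone {α : Type*} [Preorder α] {m r : ℕ} (hr : r ≤ m) {f : Fin m → α}
    (hf : Antitone f) (k : Fin r) (i : Fin m) (hi : i ∉ Set.range (Fin.castLE hr)) :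
    f i ≤ f (Fin.castLE hr k) := by
  rw [Fin.range_castLE, Set.mem_ofPred_eq, not_lt] at hi
  exact hf (k.is_lt.le.trans hi)

theorem sub_mul_conjTranspose_mul_mul_conjTranspose_self {R m n κ : Type*} [Ring R]
    [StarRing R] [Fintype n] [Fintype κ] [DecidableEq κ] (A : Matrix m n R) {X : Matrix κ n R}
    (hX : X * Xᴴ = 1) :
    (A - A * Xᴴ * X) * (A - A * Xᴴ * X)ᴴ = A * Aᴴ - A * Xᴴ * (A * Xᴴ)ᴴ := by
  have hXX (M : Matrix κ m R) : X * (Xᴴ * M) = M := by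
    rw [← Matrix.mul_assoc, hX, Matrix.one_mul]
  simp only [conjTranspose_sub, conjTranspose_mul, conjTranspose_conjTranspose, Matrix.sub_mul,
    Matrix.mul_sub, Matrix.mul_assoc, hXX]
  abel

section FrobeniusNorm

open scoped Matrix.Norms.Frobenius

variable {𝕜 m n ι κ : Type*} [RCLike 𝕜] [Fintype n] [Fintype κ]

theorem mul_conjTranspose_self_apply_self (A : Matrix m n 𝕜) (i : m) :
    (A * Aᴴ) i i = ((∑ j, ‖A i j‖ ^ 2 : ℝ) : 𝕜) := by
  simp [Matrix.mul_apply, RCLike.mul_conj]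

theorem sum_norm_sq_row_sub_mul_conjTranspose_mul [DecidableEq κ] (A : Matrix m n 𝕜)
    {X : Matrix κ n 𝕜} (hX : X * Xᴴ = 1) (i : m) :
    ∑ j, ‖(A - A * Xᴴ * X) i j‖ ^ 2 = ∑ j, ‖A i j‖ ^ 2 - ∑ k, ‖(A * Xᴴ) i k‖ ^ 2 := by
  have h := congr_fun₂ (sub_mul_conjTranspose_mul_mul_conjTranspose_self A hX) i i
  rw [Matrix.sub_apply, mul_conjTranspose_self_apply_self, mul_conjTranspose_self_apply_self,
    mul_conjTranspose_self_apply_self] at h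
  exact_mod_cast h

theorem sum_norm_sq_row_mul_conjTranspose_le [DecidableEq κ] (A : Matrix m n 𝕜)
    {X : Matrix κ n 𝕜} (hX : X * Xᴴ = 1) (i : m) :
    ∑ k, ‖(A * Xᴴ) i k‖ ^ 2 ≤ ∑ j, ‖A i j‖ ^ 2 := by
  rw [← sub_nonneg, ← sum_norm_sq_row_sub_mul_conjTranspose_mul A hX]
  positivity

theorem sum_norm_sq_row_eq_one [DecidableEq m] {A : Matrix m n 𝕜} (hA : A * Aᴴ = 1) (i : m) :
    ∑ j, ‖A i j‖ ^ 2 = 1 := by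
  have h := mul_conjTranspose_self_apply_self A i
  rw [hA, one_apply_eq] at h
  exact_mod_cast h.symm

theorem sum_norm_sq_row_mul_conjTranspose_le_one [DecidableEq m] [DecidableEq κ]
    {A : Matrix m n 𝕜} {X : Matrix κ n 𝕜} (hA : A * Aᴴ = 1) (hX : X * Xᴴ = 1) (i : m) :
    ∑ k, ‖(A * Xᴴ) i k‖ ^ 2 ≤ 1 :=
  (sum_norm_sq_row_mul_conjTranspose_le A hX i).trans_eq (sum_norm_sq_row_eq_one hA i)

variable [Fintype m] [Fintype ι]

theorem frobenius_norm_sq {α : Type*} [SeminormedAddCommGroup α] (A : Matrix m n α) :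
    ‖A‖ ^ 2 = ∑ i, ∑ j, ‖A i j‖ ^ 2 := by
  rw [frobenius_norm_def, ← Real.sqrt_eq_rpow, Real.sq_sqrt (by positivity)]
  simp

theorem frobenius_norm_sq_sub_mul_conjTranspose_mul [DecidableEq κ] (A : Matrix m n 𝕜)
    {X : Matrix κ n 𝕜} (hX : X * Xᴴ = 1) :
    ‖A - A * Xᴴ * X‖ ^ 2 = ‖A‖ ^ 2 - ‖A * Xᴴ‖ ^ 2 := by
  simp only [frobenius_norm_sq, sum_norm_sq_row_sub_mul_conjTranspose_mul A hX, sum_sub_distrib]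

theorem frobenius_norm_sq_mul_conjTranspose_le_card [DecidableEq ι] [DecidableEq κ]
    {V : Matrix ι n 𝕜} {X : Matrix κ n 𝕜} (hV : V * Vᴴ = 1) (hX : X * Xᴴ = 1) :
    ‖V * Xᴴ‖ ^ 2 ≤ Fintype.card κ := by
  calc ‖V * Xᴴ‖ ^ 2
      = ‖X * Vᴴ‖ ^ 2 := by
        rw [← frobenius_norm_conjTranspose, conjTranspose_mul, conjTranspose_conjTranspose]
    _ = ∑ k, ∑ i, ‖(X * Vᴴ) k i‖ ^ 2 := frobenius_norm_sq _
    _ ≤ ∑ _k : κ, 1 := sum_le_sum fun k _ ↦ sum_norm_sq_row_mul_conjTranspose_le_one hX hV k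
    _ = Fintype.card κ := by simp

theorem ofReal_frobenius_norm_sq (A : Matrix m n 𝕜) : ((‖A‖ ^ 2 : ℝ) : 𝕜) = (Aᴴ * A).trace := by
  rw [trace_mul_comm, trace, frobenius_norm_sq, RCLike.ofReal_sum]
  exact sum_congr rfl fun i _ ↦ (mul_conjTranspose_self_apply_self A i).symm

theorem frobenius_norm_sq_mul_of_conjTranspose_mul_self [DecidableEq ι] {U : Matrix m ι 𝕜}
    (hU : Uᴴ * U = 1) (M : Matrix ι n 𝕜) : ‖U * M‖ ^ 2 = ‖M‖ ^ 2 := by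
  have hgram : (U * M)ᴴ * (U * M) = Mᴴ * M := by
    rw [conjTranspose_mul, Matrix.mul_assoc, ← Matrix.mul_assoc Uᴴ, hU, Matrix.one_mul]
  exact RCLike.ofReal_injective (K := 𝕜) <| by
    rw [ofReal_frobenius_norm_sq, hgram, ofReal_frobenius_norm_sq]

theorem frobenius_norm_sq_diagonal_mul {R : Type*} [SeminormedRing R] [NormMulClass R]
    [DecidableEq ι] (σ : ι → R) (M : Matrix ι n R) :
    ‖diagonal σ * M‖ ^ 2 = ∑ i, ‖σ i‖ ^ 2 * ∑ j, ‖M i j‖ ^ 2 := by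
  simp only [frobenius_norm_sq, diagonal_mul, norm_mul, mul_pow, mul_sum]

section SVD

variable [DecidableEq ι] {U : Matrix m ι 𝕜} {V : Matrix ι n 𝕜}

theorem frobenius_norm_sq_svd_mul (hU : Uᴴ * U = 1) (σ : ι → 𝕜) (M : Matrix n κ 𝕜) :
    ‖U * diagonal σ * V * M‖ ^ 2 = ∑ i, ‖σ i‖ ^ 2 * ∑ k, ‖(V * M) i k‖ ^ 2 := by
  rw [Matrix.mul_assoc, Matrix.mul_assoc, frobenius_norm_sq_mul_of_conjTranspose_mul_self hU,
    frobenius_norm_sq_diagonal_mul]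

theorem frobenius_norm_sq_svd_mul_conjTranspose_submatrix (hU : Uᴴ * U = 1) (hV : V * Vᴴ = 1)
    (σ : ι → 𝕜) (e : κ → ι) :
    ‖U * diagonal σ * V * (V.submatrix e id)ᴴ‖ ^ 2 = ∑ k, ‖σ (e k)‖ ^ 2 := by
  have hcols : V * (V.submatrix e id)ᴴ = (1 : Matrix ι ι 𝕜).submatrix id e := by
    change (V * Vᴴ).submatrix id e = _
    rw [hV]
  simp only [frobenius_norm_sq_svd_mul hU, hcols, mul_sum]
  rw [sum_comm]
  simp [one_apply, apply_ite]

theorem frobenius_norm_sq_svd_mul_conjTranspose_le [DecidableEq κ] (hU : Uᴴ * U = 1)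
    (hV : V * Vᴴ = 1) {σ : ι → 𝕜} {e : κ ↪ ι}
    (he : ∀ k, ∀ i ∉ Set.range e, ‖σ i‖ ≤ ‖σ (e k)‖)
    {X : Matrix κ n 𝕜} (hX : X * Xᴴ = 1) :
    ‖U * diagonal σ * V * Xᴴ‖ ^ 2 ≤ ∑ k, ‖σ (e k)‖ ^ 2 := by
  have hmass : ∑ i, ∑ k, ‖(V * Xᴴ) i k‖ ^ 2 ≤ #(univ.map e) := by
    rw [← frobenius_norm_sq, card_map, card_univ]
    exact frobenius_norm_sq_mul_conjTranspose_le_card hV hX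
  have htop : ∀ i ∈ univ.map e, ∀ j ∉ univ.map e, ‖σ j‖ ^ 2 ≤ ‖σ i‖ ^ 2 := by
    simp only [mem_map, mem_univ, true_and]
    rintro _ ⟨k, rfl⟩ j hj
    exact pow_le_pow_left₀ (norm_nonneg _) (he k j hj) 2
  rw [frobenius_norm_sq_svd_mul hU, ← sum_map univ e fun i ↦ ‖σ i‖ ^ 2]
  exact sum_mul_le_sum_of_sum_le_card (fun i ↦ by positivity) htop (fun i ↦ by positivity)
    (sum_norm_sq_row_mul_conjTranspose_le_one hV hX) hmass

theorem eckart_young_subspace_general [DecidableEq κ] {A : Matrix m n 𝕜} {σ : ι → 𝕜}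
    (hA : A = U * diagonal σ * V) (hU : Uᴴ * U = 1) (hV : V * Vᴴ = 1) {e : κ ↪ ι}
    (he : ∀ k, ∀ i ∉ Set.range e, ‖σ i‖ ≤ ‖σ (e k)‖) {X : Matrix κ n 𝕜} (hX : X * Xᴴ = 1) :
    ‖A - A * (V.submatrix e id)ᴴ * V.submatrix e id‖ ^ 2 ≤ ‖A - A * Xᴴ * X‖ ^ 2 := by
  have hVe : V.submatrix e id * (V.submatrix e id)ᴴ = 1 := by
    change (V * Vᴴ).submatrix e e = 1
    rw [hV, submatrix_one_embedding]
  rw [frobenius_norm_sq_sub_mul_conjTranspose_mul A hVe,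
    frobenius_norm_sq_sub_mul_conjTranspose_mul A hX, hA,
    frobenius_norm_sq_svd_mul_conjTranspose_submatrix hU hV]
  exact sub_le_sub_left (frobenius_norm_sq_svd_mul_conjTranspose_le hU hV he hX) _

end SVD

theorem frobSq_eq_frobenius_norm_sq {p n : ℕ} (M : Matrix (Fin p) (Fin n) ℝ) :
    frobSq M = ‖M‖ ^ 2 := by
  simp only [frobSq, frobenius_norm_sq, Real.norm_eq_abs, sq_abs]

end FrobeniusNorm

/-- Eckart–Young, subspace form: with compact SVD `A = U Σ V`
(singular values positive and descending), among all row-orthonormal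
`X ∈ ℝ^{r×n}` (`r ≤ rank A = m`), `‖A − A Xᵀ X‖_F²` is minimized by taking `X`
to be the top `r` right singular vectors `V_{1:r}`. -/
theorem eckart_young_subspace
    (p n m r : ℕ) (hr : r ≤ m)
    (A : Matrix (Fin p) (Fin n) ℝ)
    (U : Matrix (Fin p) (Fin m) ℝ) (σ : Fin m → ℝ)
    (V : Matrix (Fin m) (Fin n) ℝ)
    (hA : A = U * Matrix.diagonal σ * V)
    (hU : Uᵀ * U = 1) (hV : V * Vᵀ = 1)
    (hσpos : ∀ i, 0 < σ i) (hσdesc : ∀ i j : Fin m, i ≤ j → σ j ≤ σ i)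
    (Vr : Matrix (Fin r) (Fin n) ℝ)
    (hVr : Vr = V.submatrix (Fin.castLE hr) id) :
    ∀ X : Matrix (Fin r) (Fin n) ℝ, X * Xᵀ = 1 →
      frobSq (A - A * Vrᵀ * Vr) ≤ frobSq (A - A * Xᵀ * X) := by
  intro X hX
  have hσ : Antitone fun i ↦ ‖σ i‖ := fun i j hij ↦ by
    simpa only [Real.norm_of_nonneg (hσpos _).le] using hσdesc i j hij
  simp only [← conjTranspose_eq_transpose_of_trivial] at hU hV hX ⊢
  simp only [hVr, frobSq_eq_frobenius_norm_sq]
  exact eckart_young_subspace_general (e := Fin.castLEEmb hr) hA hU hV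
    (le_apply_castLE_of_antitone hr hσ) hX
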